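/- arXiv:2201.05465 — 7 statements merged into one kernel-verified Lean document; each statement's English description precedes it below -/
import Mathlib

section
/- The set function val is submodular when 1/3 < α ≤ 1 and supermodular when 0 ≤ α < 1/3; that is, for all X ⊆ Y ⊆ V and every vertex v ∈ V∖Y: if 1/3 < α ≤ 1 then val(X ∪ {v}) − val(X) ≥ val(Y ∪ {v}) − val(Y), and if 0 ≤ α < 1/3 then val(X ∪ {v}) − val(X) ≤ val(Y ∪ {v}) − val(Y). -/
open Finset

variable {V : Type*} [Fintype V] [DecidableEq V]

/-- Number of edges of `G` with both endpoints in `S`. -/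
def mIn (G : SimpleGraph V) [DecidableRel G.Adj] (S : Finset V) : ℕ :=
  (G.edgeFinset.filter (fun e => ∀ v ∈ e, v ∈ S)).card

/-- Number of edges of `G` with exactly one endpoint in `S`. -/
def mCut (G : SimpleGraph V) [DecidableRel G.Adj] (S : Finset V) : ℕ :=
  (G.edgeFinset.filter (fun e => (∃ v ∈ e, v ∈ S) ∧ ∃ v ∈ e, v ∉ S)).card

/-- `val(S) = α·(m(S, V∖S) + counter(S)) + (1−α)·m(S)`. -/
noncomputable def val (G : SimpleGraph V) [DecidableRel G.Adj] (counter : V → ℕ) (α : ℝ)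
    (S : Finset V) : ℝ :=
  α * ((mCut G S : ℝ) + ∑ v ∈ S, (counter v : ℝ)) + (1 - α) * (mIn G S : ℝ)

/-- `degc(v) = deg(v) + counter(v)`. -/
def degc (G : SimpleGraph V) [DecidableRel G.Adj] (counter : V → ℕ) (v : V) : ℕ :=
  G.degree v + counter v

/-- `contribution(v, T) = α·degc(v) + (1−3α)·|N(v) ∩ T|`. -/
noncomputable def contribution (G : SimpleGraph V) [DecidableRel G.Adj] (counter : V → ℕ)
    (α : ℝ) (v : V) (T : Finset V) : ℝ :=
  α * (degc G counter v : ℝ) + (1 - 3 * α) * ((G.neighborFinset v ∩ T).card : ℝ)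

/-!
Counting incidences between `S` and the edges of `G` gives `∑ u ∈ S, deg u = m(S, V∖S) + 2 m(S)`,
so `val S = α ∑ u ∈ S, degc u + (1 - 3α) m(S)`: a modular function plus a multiple of `m`, which is
supermodular. The sign of `1 - 3α` decides between the two cases.
-/

lemma card_filter_mem_sym2_eq {U : Type*} [DecidableEq U] (S : Finset U) {e : Sym2 U}
    [Decidable ((∃ u ∈ e, u ∈ S) ∧ ∃ u ∈ e, u ∉ S)] [Decidable (∀ u ∈ e, u ∈ S)]
    (he : ¬ e.IsDiag) :
    #{u ∈ S | u ∈ e} = (if (∃ u ∈ e, u ∈ S) ∧ ∃ u ∈ e, u ∉ S then 1 else 0) +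
      2 * (if ∀ u ∈ e, u ∈ S then 1 else 0) := by
  obtain ⟨a, b, rfl⟩ : ∃ a b, e = s(a, b) := Sym2.exists.mp ⟨e, rfl⟩
  have hab : a ≠ b := by simpa only [Sym2.mk_isDiag_iff] using he
  have endpoints : {u ∈ S | u ∈ s(a, b)} = {u ∈ ({a, b} : Finset U) | u ∈ S} := by
    ext u
    simp only [mem_filter, Sym2.mem_iff, mem_insert, mem_singleton, and_comm]
  rw [endpoints, card_filter, sum_pair hab]
  by_cases ha : a ∈ S <;> by_cases hb : b ∈ S <;> simp [ha, hb]

lemma sum_degree_eq_mCut_add_two_mul_mIn (G : SimpleGraph V) [DecidableRel G.Adj] (S : Finset V) :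
    ∑ u ∈ S, G.degree u = mCut G S + 2 * mIn G S := by
  calc ∑ u ∈ S, G.degree u
      = ∑ u ∈ S, #{e ∈ G.edgeFinset | u ∈ e} :=
        sum_congr rfl fun u _ ↦ by
          rw [← G.card_incidenceFinset_eq_degree, G.incidenceFinset_eq_filter]
    _ = ∑ e ∈ G.edgeFinset, #{u ∈ S | u ∈ e} :=
        sum_card_bipartiteAbove_eq_sum_card_bipartiteBelow (· ∈ ·)
    _ = ∑ e ∈ G.edgeFinset, ((if (∃ u ∈ e, u ∈ S) ∧ ∃ u ∈ e, u ∉ S then 1 else 0) +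
          2 * (if ∀ u ∈ e, u ∈ S then 1 else 0)) :=
        sum_congr rfl fun e he ↦ card_filter_mem_sym2_eq S
          (G.not_isDiag_of_mem_edgeSet (SimpleGraph.mem_edgeFinset.mp he))
    _ = mCut G S + 2 * mIn G S := by
        rw [sum_add_distrib, ← mul_sum, ← card_filter, ← card_filter, mCut, mIn]

lemma mIn_insert (G : SimpleGraph V) [DecidableRel G.Adj] {S : Finset V} {v : V} (hv : v ∉ S) :
    mIn G (insert v S) = mIn G S + #(G.neighborFinset v ∩ S) := by
  have split_edges : {e ∈ G.edgeFinset | ∀ u ∈ e, u ∈ insert v S} =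
      {e ∈ G.edgeFinset | ∀ u ∈ e, u ∈ S} ∪ (G.neighborFinset v ∩ S).image (s(v, ·)) := by
    ext e
    induction e using Sym2.ind with
    | _ a b =>
      have adj_symm : G.Adj a b ↔ G.Adj b a := G.adj_comm a b
      have ne_of_adj : G.Adj a b → a ≠ b := G.ne_of_adj
      simp only [mem_filter, mem_union, mem_image, mem_inter, SimpleGraph.mem_edgeFinset,
        SimpleGraph.mem_edgeSet, SimpleGraph.mem_neighborFinset, Sym2.mem_iff, mem_insert,
        Sym2.eq_iff]
      grind
  have disjoint_edges : Disjoint {e ∈ G.edgeFinset | ∀ u ∈ e, u ∈ S}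
      ((G.neighborFinset v ∩ S).image (s(v, ·))) := by
    rw [disjoint_right, forall_mem_image]
    exact fun w _ hw ↦ hv ((mem_filter.mp hw).2 v (Sym2.mem_mk_left v w))
  rw [mIn, mIn, split_edges, card_union_of_disjoint disjoint_edges,
    card_image_of_injective _ fun _ _ ↦ Sym2.congr_right.mp]

lemma val_eq_sum_degc_add_mIn (G : SimpleGraph V) [DecidableRel G.Adj] (counter : V → ℕ) (α : ℝ)
    (S : Finset V) :
    val G counter α S = α * ∑ u ∈ S, (degc G counter u : ℝ) + (1 - 3 * α) * mIn G S := by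
  have handshake : ∑ u ∈ S, (G.degree u : ℝ) = mCut G S + 2 * mIn G S :=
    mod_cast sum_degree_eq_mCut_add_two_mul_mIn G S
  simp only [_root_.val, degc, Nat.cast_add, sum_add_distrib, handshake]
  ring

lemma val_insert_sub_val (G : SimpleGraph V) [DecidableRel G.Adj] (counter : V → ℕ) (α : ℝ)
    {S : Finset V} {v : V} (hv : v ∉ S) :
    val G counter α (insert v S) - val G counter α S = contribution G counter α v S := by
  rw [val_eq_sum_degc_add_mIn, val_eq_sum_degc_add_mIn, sum_insert hv, mIn_insert G hv,
    contribution]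
  push_cast
  ring

lemma contribution_antitone (G : SimpleGraph V) [DecidableRel G.Adj] (counter : V → ℕ) {α : ℝ}
    (hα : 1 / 3 ≤ α) (v : V) : Antitone (contribution G counter α v) := by
  intro X Y hXY
  have hcoeff : 1 - 3 * α ≤ 0 := by linarith
  exact add_le_add_right (mul_le_mul_of_nonpos_left
    (mod_cast card_le_card (inter_subset_inter_left hXY)) hcoeff) _

lemma contribution_monotone (G : SimpleGraph V) [DecidableRel G.Adj] (counter : V → ℕ) {α : ℝ}
    (hα : α ≤ 1 / 3) (v : V) : Monotone (contribution G counter α v) := by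
  intro X Y hXY
  have hcoeff : 0 ≤ 1 - 3 * α := by linarith
  exact add_le_add_right (mul_le_mul_of_nonneg_left
    (mod_cast card_le_card (inter_subset_inter_left hXY)) hcoeff) _

theorem val_submodular_supermodular_general (G : SimpleGraph V) [DecidableRel G.Adj]
    (counter : V → ℕ) (α : ℝ) (X Y : Finset V) (hXY : X ⊆ Y) (v : V) (hv : v ∉ Y) :
    (1 / 3 ≤ α →
      val G counter α (insert v X) - val G counter α X ≥
        val G counter α (insert v Y) - val G counter α Y) ∧
    (α ≤ 1 / 3 →
      val G counter α (insert v X) - val G counter α X ≤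
        val G counter α (insert v Y) - val G counter α Y) := by
  rw [val_insert_sub_val G counter α hv, val_insert_sub_val G counter α (notMem_mono hXY hv)]
  exact ⟨fun hα ↦ contribution_antitone G counter hα v hXY,
    fun hα ↦ contribution_monotone G counter hα v hXY⟩

/-- `val` is submodular for `1/3 < α ≤ 1` and supermodular for `0 ≤ α < 1/3`. -/
theorem val_submodular_supermodular (G : SimpleGraph V) [DecidableRel G.Adj]
    (counter : V → ℕ) (α : ℝ) (X Y : Finset V) (hXY : X ⊆ Y) (v : V) (hv : v ∉ Y) :
    (1 / 3 < α ∧ α ≤ 1 →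
      val G counter α (insert v X) - val G counter α X ≥
        val G counter α (insert v Y) - val G counter α Y) ∧
    (0 ≤ α ∧ α < 1 / 3 →
      val G counter α (insert v X) - val G counter α X ≤
        val G counter α (insert v Y) - val G counter α Y) := by
  have general := val_submodular_supermodular_general G counter α X Y hXY v hv
  exact ⟨fun hα ↦ general.1 hα.1.le, fun hα ↦ general.2 hα.2.le⟩
end

section
/- Suppose 1/3 < α ≤ 1. Let T ⊆ V with |T| ≤ k and k' := k − |T| ≥ 1, let t be a real number and set t' := t − val(T). Suppose there is a vertex u ∈ V∖T with counter(u) = 0 and contribution(u, T) ≥ t'/k' − (3α−1)·(k−1)², and let v ∈ V∖T be a vertex satisfying contribution(v, T) ≤ t'/k' + (3α−1)·(k−1). Then α·counter(v) ≤ α·deg(u) + (3α−1)·k². -/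
open Finset

variable {V : Type*} [Fintype V] [DecidableEq V]

/-!
Since `3α − 1 ≥ 0`, the neighbors in `T` lower the contribution of a vertex below its value `α·degc`
for `T = ∅` by at most `(3α − 1)·|T|`. Hence comparing contributions amounts to comparing `α·degc`
up to `(3α − 1)·|T| ≤ (3α − 1)·k`, and together with the slacks of the two contribution bounds this
error is at most `(3α − 1)·(k + (k − 1) + (k − 1)²) = (3α − 1)·k²`.
-/

section

variable {G : SimpleGraph V} [DecidableRel G.Adj] {counter : V → ℕ} {α : ℝ} {T : Finset V}
  {u v : V}

theorem contribution_le_mul_degc (hα : 1 / 3 ≤ α) :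
    contribution G counter α v T ≤ α * degc G counter v :=
  add_le_of_nonpos_right <|
    mul_nonpos_of_nonpos_of_nonneg (by linarith) (Nat.cast_nonneg _)

theorem mul_degc_sub_mul_card_le_contribution (hα : 1 / 3 ≤ α) :
    α * degc G counter v - (3 * α - 1) * #T ≤ contribution G counter α v T := by
  have card_inter_le : (#(G.neighborFinset v ∩ T) : ℝ) ≤ #T :=
    mod_cast card_le_card inter_subset_right
  have loss_le : (3 * α - 1) * #(G.neighborFinset v ∩ T) ≤ (3 * α - 1) * #T :=
    mul_le_mul_of_nonneg_left card_inter_le (by linarith)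
  unfold contribution
  linarith

theorem mul_degc_le_of_contribution_le {s : ℝ} (hα : 1 / 3 ≤ α)
    (h : contribution G counter α v T ≤ contribution G counter α u T + s) :
    α * degc G counter v ≤ α * degc G counter u + (3 * α - 1) * #T + s := by
  have hv : α * degc G counter v - (3 * α - 1) * #T ≤ contribution G counter α v T :=
    mul_degc_sub_mul_card_le_contribution hα
  have hu : contribution G counter α u T ≤ α * degc G counter u :=
    contribution_le_mul_degc hα
  linarith

theorem counter_bound_general {k : ℕ} {x : ℝ} (hα : 1 / 3 ≤ α) (hTk : #T ≤ k)
    (hu : x - (3 * α - 1) * ((k : ℝ) - 1) ^ 2 ≤ contribution G counter α u T)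
    (hv : contribution G counter α v T ≤ x + (3 * α - 1) * ((k : ℝ) - 1)) :
    α * counter v ≤ α * degc G counter u + (3 * α - 1) * (k : ℝ) ^ 2 := by
  have counter_le_degc : (counter v : ℝ) ≤ degc G counter v := by
    exact_mod_cast Nat.le_add_left (counter v) (G.degree v)
  have hcoeff : 0 ≤ 3 * α - 1 := by linarith
  have contribution_le : contribution G counter α v T ≤ contribution G counter α u T +
      (3 * α - 1) * (((k : ℝ) - 1) + ((k : ℝ) - 1) ^ 2) := by
    linarith
  calc
    α * counter v ≤ α * degc G counter v :=
      mul_le_mul_of_nonneg_left counter_le_degc (by linarith)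
    _ ≤ α * degc G counter u + (3 * α - 1) * #T +
        (3 * α - 1) * (((k : ℝ) - 1) + ((k : ℝ) - 1) ^ 2) :=
      mul_degc_le_of_contribution_le hα contribution_le
    _ ≤ α * degc G counter u + (3 * α - 1) * k +
        (3 * α - 1) * (((k : ℝ) - 1) + ((k : ℝ) - 1) ^ 2) := by
      gcongr
    _ = α * degc G counter u + (3 * α - 1) * (k : ℝ) ^ 2 := by ring

end

/-- Bounding the counter: for `1/3 < α ≤ 1`, if some `u ∉ T` has `counter(u) = 0` and
contribution at least `t'/k' − (3α−1)(k−1)²`, then every `v ∉ T` with contribution at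
most `t'/k' + (3α−1)(k−1)` satisfies `α·counter(v) ≤ α·deg(u) + (3α−1)·k²`. -/
theorem counter_bound (G : SimpleGraph V) [DecidableRel G.Adj]
    (counter : V → ℕ) (α : ℝ) (hα1 : 1 / 3 < α) (hα2 : α ≤ 1)
    (T : Finset V) (k : ℕ) (t : ℝ) (hTk : T.card < k)
    (u : V) (huT : u ∉ T) (hu0 : counter u = 0)
    (hu : contribution G counter α u T ≥
      (t - val G counter α T) / ((k : ℝ) - T.card) - (3 * α - 1) * ((k : ℝ) - 1) ^ 2)
    (v : V) (hvT : v ∉ T)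
    (hv : contribution G counter α v T ≤
      (t - val G counter α T) / ((k : ℝ) - T.card) + (3 * α - 1) * ((k : ℝ) - 1)) :
    α * (counter v : ℝ) ≤ α * (G.degree u : ℝ) + (3 * α - 1) * (k : ℝ) ^ 2 := by
  simpa [degc, hu0] using counter_bound_general hα1.le hTk.le hu hv
end

section
/- For all integers q ≥ 1, b ≥ 1 and c ≥ 1, every c-closed finite simple graph with at least (c−1)·binom(b−1, 2) + (q−1)·(b−1) + 1 vertices contains a clique of size q or an independent set of size b. -/
open Finset

variable {V : Type*} [Fintype V] [DecidableEq V]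

/-- `I` is an independent set of `G`: pairwise non-adjacent vertices. -/
def IndepOn (G : SimpleGraph V) (I : Finset V) : Prop :=
  ∀ u ∈ I, ∀ w ∈ I, u ≠ w → ¬ G.Adj u w

/-- `G` is `c`-closed: every pair of distinct non-adjacent vertices has at most
`c − 1` common neighbors. -/
def CClosed (G : SimpleGraph V) [DecidableRel G.Adj] (c : ℕ) : Prop :=
  ∀ u v : V, u ≠ v → ¬ G.Adj u v → (G.neighborFinset u ∩ G.neighborFinset v).card ≤ c - 1

/-!
Let `I` be a maximum independent set. Every vertex outside `I` has a neighbor in `I`, so every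
vertex of the graph either is adjacent to two members of `I`, or belongs to the private
neighborhood of some `v ∈ I`: it is `v` itself or its only neighbor in `I` is `v`. There are
`C(|I|, 2)` pairs in `I`, each with at most `c - 1` common neighbors. Each private neighborhood is
a clique, since two non-adjacent members of it could replace `v` in `I`.
-/

section

variable {α : Type*} {G : SimpleGraph α}

theorem encard_le_of_isClique_of_cliqueFree_succ {s : Set α} {n : ℕ} (hs : G.IsClique s)
    (hfree : G.CliqueFree (n + 1)) : s.encard ≤ n := by
  by_contra! hlt
  obtain ⟨t, hts, ht⟩ := Set.exists_subset_encard_eq (Order.add_one_le_of_lt hlt)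
  have htfin : t.Finite := Set.finite_of_encard_eq_coe (k := n + 1) (mod_cast ht)
  lift t to Finset α using htfin
  rw [Set.encard_coe_eq_coe_finsetCard] at ht
  exact hfree t ⟨hs.subset hts, mod_cast ht⟩

theorem exists_isNClique_cliqueFree_succ {n : ℕ} (hfree : G.CliqueFree (n + 1)) :
    ∃ m ≤ n, ∃ s, G.IsNClique m s ∧ G.CliqueFree (m + 1) := by
  have hempty : ¬ G.CliqueFree 0 := fun h ↦ h ∅ (by simp)
  obtain ⟨m, hm, hmfree⟩ := Nat.exists_not_and_succ_of_not_zero_of_exists hempty ⟨n + 1, hfree⟩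
  obtain ⟨s, hs⟩ := not_forall_not.1 hm
  have hmn : m ≤ n := by
    by_contra! hlt
    exact hm (hfree.mono hlt)
  exact ⟨m, hmn, s, hs, hmfree⟩

/-- The private neighborhood of `v ∈ I` with respect to `I`: the vertices whose closed neighborhood
meets `I` in exactly `v`. With closed neighborhoods, every member of an independent set `I` lies in
its own private neighborhood; for a maximum `I` these sets are cliques. -/
def privateNeighbors (G : SimpleGraph α) (I : Set α) (v : α) : Set α :=
  {x | ∀ w ∈ I, w = x ∨ G.Adj w x ↔ w = v}

/-- The vertices adjacent to at least two members of `I`: those that the private neighborhoods with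
respect to a maximum independent set `I` miss. -/
def sharedNeighbors (G : SimpleGraph α) (I : Set α) : Set α :=
  {x | ∃ u ∈ I, ∃ v ∈ I, u ≠ v ∧ x ∈ G.commonNeighbors u v}

theorem encard_sharedNeighbors_le {I : Finset α} {k : ℕ∞}
    (hcommon : ∀ u ∈ I, ∀ v ∈ I, u ≠ v → (G.commonNeighbors u v).encard ≤ k) :
    (sharedNeighbors G I).encard ≤ (#I).choose 2 * k := by
  classical
  have hcover : sharedNeighbors G I ⊆ ⋃ p ∈ I.powersetCard 2, ⋂ w ∈ p, G.neighborSet w := by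
    rintro x ⟨u, hu, v, hv, huv, hx⟩
    have hpair : {u, v} ∈ I.powersetCard 2 :=
      mem_powersetCard.2 ⟨insert_subset hu (singleton_subset_iff.2 hv), card_pair huv⟩
    exact Set.mem_biUnion hpair (by simpa [SimpleGraph.commonNeighbors_eq] using hx)
  have hpairs : ∀ p ∈ I.powersetCard 2, (⋂ w ∈ p, G.neighborSet w).encard ≤ k := by
    intro p hp
    obtain ⟨hpI, hpcard⟩ := mem_powersetCard.1 hp
    obtain ⟨u, v, huv, rfl⟩ := card_eq_two.1 hpcard
    simpa [SimpleGraph.commonNeighbors_eq] using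
      hcommon u (hpI (by simp)) v (hpI (by simp)) huv
  calc (sharedNeighbors G I).encard
      ≤ ∑ p ∈ I.powersetCard 2, (⋂ w ∈ p, G.neighborSet w).encard :=
        (Set.encard_le_encard hcover).trans (set_encard_biUnion_le _ _)
    _ ≤ #(I.powersetCard 2) • k := sum_le_card_nsmul _ _ _ hpairs
    _ = (#I).choose 2 * k := by rw [card_powersetCard, nsmul_eq_mul]

section MaximumIndepSet

variable {I : Finset α} {n : ℕ}

theorem isClique_privateNeighbors (hI : G.IsNIndepSet n I) (hmax : G.IndepSetFree (n + 1))
    {v : α} (hv : v ∈ I) : G.IsClique (privateNeighbors G I v) := by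
  classical
  intro x hx y hy hxy
  by_contra hnadj
  have compl_adj {z w : α} (hz : z ∈ privateNeighbors G I v) (hw : w ∈ I) (hwv : w ≠ v) :
      Gᶜ.Adj z w := by
    have hzw : ¬ (w = z ∨ G.Adj w z) := (hz w hw).not.2 hwv
    rw [SimpleGraph.compl_adj, G.adj_comm]
    exact ⟨fun h ↦ hzw (.inl h.symm), fun h ↦ hzw (.inr h)⟩
  have hswap : Gᶜ.IsNClique n (insert y (I.erase v)) :=
    ((SimpleGraph.isNClique_compl G).2 hI).insert_erase
      (fun w hw ↦ compl_adj hy (mem_sdiff.1 hw).1 (by simpa using (mem_sdiff.1 hw).2)) hv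
  have hinsert : Gᶜ.IsNClique (n + 1) (insert x (insert y (I.erase v))) :=
    hswap.insert <| (forall_mem_insert _ _ _).2
      ⟨(SimpleGraph.compl_adj ..).2 ⟨hxy, hnadj⟩,
        fun w hw ↦ compl_adj hx (mem_of_mem_erase hw) (ne_of_mem_erase hw)⟩
  exact hmax _ ((SimpleGraph.isNClique_compl G).1 hinsert)

theorem exists_mem_eq_or_adj (hI : G.IsNIndepSet n I) (hmax : G.IndepSetFree (n + 1)) (x : α) :
    ∃ v ∈ I, v = x ∨ G.Adj v x := by
  rw [← SimpleGraph.isNClique_compl] at hI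
  rw [← SimpleGraph.cliqueFree_compl] at hmax
  obtain ⟨v, hv, hnadj⟩ := hI.exists_not_adj_of_cliqueFree_succ hmax x
  refine ⟨v, hv, ?_⟩
  rw [SimpleGraph.compl_adj, not_and_not_right, G.adj_comm] at hnadj
  exact or_iff_not_imp_left.2 fun hvx ↦ hnadj (Ne.symm hvx)

theorem sharedNeighbors_union_biUnion_privateNeighbors (hI : G.IsNIndepSet n I)
    (hmax : G.IndepSetFree (n + 1)) :
    sharedNeighbors G I ∪ ⋃ v ∈ I, privateNeighbors G I v = Set.univ := by
  refine Set.eq_univ_of_forall fun x ↦ ?_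
  obtain ⟨v, hv, hvx⟩ := exists_mem_eq_or_adj hI hmax x
  by_cases hunique : ∀ w ∈ I, w = x ∨ G.Adj w x → w = v
  · exact .inr <| Set.mem_biUnion hv fun w hw ↦ ⟨hunique w hw, fun h ↦ h ▸ hvx⟩
  push Not at hunique
  obtain ⟨w, hw, hwx, hwv⟩ := hunique
  have hnadj : ¬ G.Adj w v := hI.isIndepSet hw hv hwv
  left
  refine ⟨w, hw, v, hv, hwv, ?_⟩
  rcases hwx with rfl | hwx
  · exact (hvx.elim (hwv ·.symm) (hnadj ·.symm)).elim
  rcases hvx with rfl | hvx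
  · exact (hnadj hwx).elim
  exact ⟨hwx, hvx⟩

end MaximumIndepSet

theorem card_le_of_cliqueFree_succ_of_indepSetFree_succ {k m n : ℕ}
    (hcommon : ∀ u v, u ≠ v → ¬ G.Adj u v → (G.commonNeighbors u v).encard ≤ k)
    (hclique : G.CliqueFree (m + 1)) (hindep : G.IndepSetFree (n + 1)) :
    ENat.card α ≤ (k * n.choose 2 + m * n : ℕ) := by
  rw [← SimpleGraph.cliqueFree_compl] at hindep
  obtain ⟨d, hdn, I, hI, hmax⟩ := exists_isNClique_cliqueFree_succ hindep
  rw [SimpleGraph.isNClique_compl] at hI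
  rw [SimpleGraph.cliqueFree_compl] at hmax
  have hshared : (sharedNeighbors G I).encard ≤ d.choose 2 * k := hI.card_eq ▸
    encard_sharedNeighbors_le fun u hu v hv huv ↦ hcommon u v huv (hI.isIndepSet hu hv huv)
  have hprivate : ∀ v ∈ I, (privateNeighbors G I v).encard ≤ m := fun v hv ↦
    encard_le_of_isClique_of_cliqueFree_succ (isClique_privateNeighbors hI hmax hv) hclique
  calc ENat.card α
      = (sharedNeighbors G I ∪ ⋃ v ∈ I, privateNeighbors G I v).encard := by
        rw [sharedNeighbors_union_biUnion_privateNeighbors hI hmax, Set.encard_univ]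
    _ ≤ (sharedNeighbors G I).encard + (⋃ v ∈ I, privateNeighbors G I v).encard :=
        Set.encard_union_le _ _
    _ ≤ (sharedNeighbors G I).encard + ∑ v ∈ I, (privateNeighbors G I v).encard := by
        gcongr
        exact set_encard_biUnion_le _ _
    _ ≤ d.choose 2 * k + #I • (m : ℕ∞) := by
        gcongr
        exact sum_le_card_nsmul _ _ _ hprivate
    _ = (k * d.choose 2 + m * d : ℕ) := by
        rw [hI.card_eq, nsmul_eq_mul]
        push_cast
        ring
    _ ≤ (k * n.choose 2 + m * n : ℕ) := by gcongr

theorem cclosed_ramsey_general {k m n : ℕ}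
    (hcommon : ∀ u v, u ≠ v → ¬ G.Adj u v → (G.commonNeighbors u v).encard ≤ k)
    (hcard : (k * n.choose 2 + m * n : ℕ) < ENat.card α) :
    (∃ K, G.IsNClique (m + 1) K) ∨ ∃ I, G.IsNIndepSet (n + 1) I := by
  by_contra! hfree
  exact hcard.not_ge (card_le_of_cliqueFree_succ_of_indepSetFree_succ hcommon hfree.1 hfree.2)

end

theorem CClosed.encard_commonNeighbors_le {G : SimpleGraph V} [DecidableRel G.Adj] {c : ℕ}
    (hG : CClosed G c) {u v : V} (huv : u ≠ v) (hnadj : ¬ G.Adj u v) :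
    (G.commonNeighbors u v).encard ≤ (c - 1 : ℕ) := by
  have hcoe : G.commonNeighbors u v = (G.neighborFinset u ∩ G.neighborFinset v : Finset V) := by
    simp [SimpleGraph.commonNeighbors_eq]
  rw [hcoe, Set.encard_coe_eq_coe_finsetCard]
  exact mod_cast hG u v huv hnadj

/-- Ramsey-type bound in `c`-closed graphs: every `c`-closed graph on at least
`(c−1)·C(b−1,2) + (q−1)(b−1) + 1` vertices contains a clique of size `q` or an
independent set of size `b`. -/
theorem cclosed_ramsey (G : SimpleGraph V) [DecidableRel G.Adj]
    (q b c : ℕ) (hq : 1 ≤ q) (hb : 1 ≤ b) (hc : 1 ≤ c) (hG : CClosed G c)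
    (hcard : (c - 1) * Nat.choose (b - 1) 2 + (q - 1) * (b - 1) + 1 ≤ Fintype.card V) :
    (∃ K : Finset V, K.card = q ∧ G.IsClique (K : Set V)) ∨
      (∃ I : Finset V, I.card = b ∧ IndepOn G I) := by
  have hcommon : ∀ u v, u ≠ v → ¬ G.Adj u v → (G.commonNeighbors u v).encard ≤ (c - 1 : ℕ) :=
    fun _ _ ↦ hG.encard_commonNeighbors_le
  have hramsey := cclosed_ramsey_general hcommon (m := q - 1) (n := b - 1)
    (by rw [ENat.card_eq_coe_fintype_card]; exact mod_cast hcard)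
  rw [Nat.sub_add_cancel hq, Nat.sub_add_cancel hb] at hramsey
  exact hramsey.imp (fun ⟨K, hK⟩ ↦ ⟨K, hK.card_eq, hK.isClique⟩)
    fun ⟨I, hI⟩ ↦ ⟨I, hI.card_eq, fun u hu w hw ↦ hI.isIndepSet hu hw⟩
end

section
/- Let c ≥ 2 and k ≥ 1 be integers and let G be a c-closed finite simple graph on vertex set V. Suppose some vertex v₀ has an independent set I₀ ⊆ N(v₀) with |I₀| > (k+1)·k^{c−1}. Then there exist an integer i with 1 ≤ i ≤ c−1, a set X of exactly i vertices with v₀ ∈ X, and an independent set I contained in the common neighborhood ∩_{x∈X} N(x), such that |I| > (k+1)·k^{c−i} and every vertex u ∈ V∖X satisfies |N(u) ∩ I| ≤ (k+1)·k^{c−i−1}. -/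
open Finset

variable {V : Type*} [Fintype V] [DecidableEq V]

/-!
Grow `X` greedily: as long as some `u ∉ X` has more than the permitted number of neighbors in `I`,
replace `(X, I)` by `(X ∪ {u}, N(u) ∩ I)`. Throughout, every vertex of `X` is adjacent to every
vertex of `I`. As `I` contains two distinct non-adjacent vertices whenever `|X| ≥ c`, and these have
all of `X` as common neighbors, being `c`-closed forces the process to stop before `|X| = c`.
-/

section ArbitraryVertexSet

variable {α : Type*} {G : SimpleGraph α} {c : ℕ}

/-- The notion of a `c`-closed graph on a possibly infinite vertex set. Writing the bound as `< c`
rather than `≤ c - 1` avoids truncated subtraction; the two differ only for `c = 0`. -/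
def CommonNeighborsLT (G : SimpleGraph α) (c : ℕ) : Prop :=
  ∀ ⦃u v : α⦄, u ≠ v → ¬ G.Adj u v → (G.commonNeighbors u v).encard < c

theorem CommonNeighborsLT.encard_lt_of_isCompleteBetween (hG : CommonNeighborsLT G c)
    {X I : Set α} (hI : G.IsIndepSet I) (hI₂ : I.Nontrivial) (hXI : G.IsCompleteBetween X I) :
    X.encard < c := by
  obtain ⟨a, ha, b, hb, hab⟩ := hI₂
  have hX : X ⊆ G.commonNeighbors a b := fun x hx ↦ ⟨(hXI hx ha).symm, (hXI hx hb).symm⟩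
  exact (Set.encard_le_encard hX).trans_lt (hG hab (hI ha hb hab))

theorem isCompleteBetween_insert_sep_adj {X I : Set α} (hXI : G.IsCompleteBetween X I) (u : α) :
    G.IsCompleteBetween (insert u X) {w ∈ I | G.Adj u w} := by
  rintro x (rfl | hx) w ⟨hwI, hw⟩
  · exact hw
  · exact hXI hx hwI

theorem cclosed_find_X_I_general [DecidableRel G.Adj] (hG : CommonNeighborsLT G c)
    {t : ℕ → ℕ} (ht : ∀ i, c ≤ i → 0 < t i) {X₀ I₀ : Finset α} (hI₀ : G.IsIndepSet I₀)
    (hXI₀ : G.IsCompleteBetween X₀ I₀) (hcard₀ : t #X₀ < #I₀) :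
    ∃ X I : Finset α, X₀ ⊆ X ∧ I ⊆ I₀ ∧ G.IsCompleteBetween X I ∧ #X < c ∧ t #X < #I ∧
      ∀ u ∉ X, #{w ∈ I | G.Adj u w} ≤ t (#X + 1) := by
  classical
  have hX₀c : #X₀ < c := by
    by_contra! hc
    have hI₂ : (I₀ : Set α).Nontrivial :=
      one_lt_card_iff_nontrivial.1 ((Nat.succ_le_of_lt (ht _ hc)).trans_lt hcard₀)
    have hlt := hG.encard_lt_of_isCompleteBetween hI₀ hI₂ hXI₀
    rw [Set.encard_coe_eq_coe_finsetCard, Nat.cast_lt] at hlt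
    exact hlt.not_ge hc
  by_cases hfew : ∀ u ∉ X₀, #{w ∈ I₀ | G.Adj u w} ≤ t (#X₀ + 1)
  · exact ⟨X₀, I₀, Subset.rfl, Subset.rfl, hXI₀, hX₀c, hcard₀, hfew⟩
  · push Not at hfew
    obtain ⟨u, hu, hmany⟩ := hfew
    have hX₁ : #(insert u X₀) = #X₀ + 1 := card_insert_of_notMem hu
    have hI₁ : {w ∈ I₀ | G.Adj u w} ⊆ I₀ := filter_subset _ _
    have hXI₁ : G.IsCompleteBetween ↑(insert u X₀) ↑{w ∈ I₀ | G.Adj u w} := by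
      simpa only [coe_insert, coe_filter, mem_coe] using isCompleteBetween_insert_sep_adj hXI₀ u
    obtain ⟨X, I, hX, hI, hXI⟩ := cclosed_find_X_I_general hG ht
      (hI₀.mono (coe_subset.2 hI₁)) hXI₁ (hX₁.symm ▸ hmany)
    exact ⟨X, I, (subset_insert u X₀).trans hX, hI.trans hI₁, hXI⟩
termination_by c - #X₀

end ArbitraryVertexSet

theorem CClosed.commonNeighborsLT {G : SimpleGraph V} [DecidableRel G.Adj] {c : ℕ} (hc : c ≠ 0)
    (hG : CClosed G c) : CommonNeighborsLT G c := by
  intro u v huv hadj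
  have hcard := hG u v huv hadj
  have hcommon : G.commonNeighbors u v = ↑(G.neighborFinset u ∩ G.neighborFinset v) := by
    simp only [coe_inter, SimpleGraph.coe_neighborFinset, SimpleGraph.commonNeighbors_eq]
  rw [hcommon, Set.encard_coe_eq_coe_finsetCard, Nat.cast_lt]
  lia

theorem neighborFinset_inter_eq_filter (G : SimpleGraph V) [DecidableRel G.Adj] (u : V)
    (I : Finset V) : G.neighborFinset u ∩ I = {w ∈ I | G.Adj u w} := by
  ext w
  simp [and_comm]

/-- In a `c`-closed graph, a vertex with a huge independent set in its neighborhood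
yields a set `X` of `i ≤ c−1` vertices and a large independent set `I` in the common
neighborhood of `X` such that every vertex outside `X` has few neighbors in `I`. -/
theorem cclosed_find_X_I (G : SimpleGraph V) [DecidableRel G.Adj]
    (c k : ℕ) (hc : 2 ≤ c) (hk : 1 ≤ k) (hG : CClosed G c)
    (v₀ : V) (I₀ : Finset V) (hI₀sub : I₀ ⊆ G.neighborFinset v₀)
    (hI₀ind : IndepOn G I₀) (hI₀card : (k + 1) * k ^ (c - 1) < I₀.card) :
    ∃ (i : ℕ) (X I : Finset V), 1 ≤ i ∧ i ≤ c - 1 ∧ X.card = i ∧ v₀ ∈ X ∧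
      IndepOn G I ∧ (∀ x ∈ X, I ⊆ G.neighborFinset x) ∧
      (k + 1) * k ^ (c - i) < I.card ∧
      ∀ u : V, u ∉ X → (G.neighborFinset u ∩ I).card ≤ (k + 1) * k ^ (c - i - 1) := by
  have hXI₀ : G.IsCompleteBetween ↑({v₀} : Finset V) I₀ := by
    rintro x hx w hw
    obtain rfl := mem_singleton.1 hx
    exact (G.mem_neighborFinset x w).1 (hI₀sub hw)
  obtain ⟨X, I, hX, hI, hXI, hXc, hcard, hfew⟩ := cclosed_find_X_I_general
    (t := fun i ↦ (k + 1) * k ^ (c - i)) (hG.commonNeighborsLT (by lia))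
    (fun i hi ↦ by simp [Nat.sub_eq_zero_of_le hi])
    (fun u hu w hw ↦ hI₀ind u hu w hw) hXI₀ hI₀card
  have hv₀ : v₀ ∈ X := singleton_subset_iff.1 hX
  refine ⟨#X, X, I, card_pos.2 ⟨v₀, hv₀⟩, Nat.le_sub_one_of_lt hXc, rfl, hv₀,
    fun u hu w hw ↦ hI₀ind u (hI hu) w (hI hw),
    fun x hx w hw ↦ (G.mem_neighborFinset x w).2 (hXI hx hw), hcard, fun u hu ↦ ?_⟩
  rw [neighborFinset_inter_eq_filter, Nat.sub_sub]
  exact hfew u hu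
end

section
/- Let 1 ≤ a ≤ b and k ≥ 1 be integers and let G be a K_{a,b}-free finite simple graph. If G has at least k + b·binom(k, a) + Σ_{ℓ=1}^{a−1} binom(a+b+ℓ−1, a+b−1)·binom(k, ℓ) vertices, then G contains an independent set of size k. -/
open Finset

variable {V : Type*} [Fintype V] [DecidableEq V]

/-- `G` is `K_{a,b}`-free: it contains no complete bipartite subgraph with parts of
sizes `a` and `b`. -/
def KabFree (G : SimpleGraph V) (a b : ℕ) : Prop :=
  ¬ ∃ (A B : Finset V), Disjoint A B ∧ A.card = a ∧ B.card = b ∧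
    ∀ u ∈ A, ∀ v ∈ B, G.Adj u v

/-!
Let `I` be an independent set of maximum size and sort the vertices outside `I` by their
neighbourhood in `I`. Each `a`-subset of `I` has fewer than `b` common neighbours, which controls
the vertices with at least `a` neighbours in `I`. Every other vertex has some neighbourhood
`S ⊆ I` with `1 ≤ |S| < a`. The vertices sharing the same `S` contain no independent set `J`
with `|J| > |S|`, since exchanging `S` for `J` would enlarge `I`, and no clique of size `a + b`,
since it would contain a `K_{a,b}`; so Ramsey's theorem bounds their number.
-/

section

variable {α : Type*} {G : SimpleGraph α} {W I : Finset α}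

theorem exists_isNClique_or_isNIndepSet (G : SimpleGraph α) (s t : ℕ) (W : Finset α)
    (hW : (s + t).choose s ≤ #W) :
    (∃ C ⊆ W, G.IsNClique (s + 1) C) ∨ ∃ J ⊆ W, G.IsNIndepSet (t + 1) J := by
  classical
  obtain ⟨v, hv⟩ := card_pos.mp <| (Nat.choose_pos (Nat.le_add_right s t)).trans_le hW
  have hvW : {v} ⊆ W := singleton_subset_iff.mpr hv
  match s, t with
  | 0, _ => exact .inl ⟨{v}, hvW, by simp [SimpleGraph.isNClique_iff]⟩
  | _ + 1, 0 => exact .inr ⟨{v}, hvW, by simp [SimpleGraph.isNIndepSet_iff]⟩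
  | s + 1, t + 1 =>
    let N := {w ∈ W.erase v | G.Adj v w}
    let M := {w ∈ W.erase v | ¬ G.Adj v w}
    have hNW : N ⊆ W := (filter_subset _ _).trans (erase_subset _ _)
    have hMW : M ⊆ W := (filter_subset _ _).trans (erase_subset _ _)
    have hNM : #N + #M + 1 = #W := by
      rw [card_filter_add_card_filter_not, card_erase_add_one hv]
    have pascal : (s + 1 + (t + 1)).choose (s + 1) =
        (s + (t + 1)).choose s + (s + 1 + t).choose (s + 1) := by
      rw [show s + 1 + (t + 1) = s + (t + 1) + 1 by omega, Nat.choose_succ_succ,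
        show s + (t + 1) = s + 1 + t by omega]
    obtain hN | hM : (s + (t + 1)).choose s ≤ #N ∨ (s + 1 + t).choose (s + 1) ≤ #M := by omega
    · refine (exists_isNClique_or_isNIndepSet G s (t + 1) N hN).imp ?_ ?_
      · rintro ⟨C, hCN, hC⟩
        exact ⟨insert v C, insert_subset hv (hCN.trans hNW),
          hC.insert fun w hw ↦ (mem_filter.mp (hCN hw)).2⟩
      · rintro ⟨J, hJN, hJ⟩
        exact ⟨J, hJN.trans hNW, hJ⟩
    · refine (exists_isNClique_or_isNIndepSet G (s + 1) t M hM).imp ?_ ?_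
      · rintro ⟨C, hCM, hC⟩
        exact ⟨C, hCM.trans hMW, hC⟩
      · rintro ⟨J, hJM, hJ⟩
        refine ⟨insert v J, insert_subset hv (hJM.trans hMW), ?_⟩
        rw [← SimpleGraph.isNClique_compl] at hJ ⊢
        refine hJ.insert fun w hw ↦ ?_
        obtain ⟨hwW, hvw⟩ := mem_filter.mp (hJM hw)
        exact ⟨(ne_of_mem_erase hwW).symm, hvw⟩

/-- The neighbourhood `N(v) ∩ I` of a vertex `v` in a finite set `I` of vertices, by which
the vertices outside `I` are classified. -/
def neighborsIn (G : SimpleGraph α) [DecidableRel G.Adj] (I : Finset α) (v : α) : Finset α :=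
  {u ∈ I | G.Adj u v}

/-- `I` is a maximum independent set of the subgraph of `G` induced on the finite set `W`: the
set whose extremality drives the exchange argument. The ambient graph may be infinite, unlike in
`SimpleGraph.IsMaximumIndepSet`. -/
structure IsMaximumIndepSetIn (G : SimpleGraph α) (W I : Finset α) : Prop where
  subset : I ⊆ W
  isIndepSet : G.IsIndepSet I
  card_le_card : ∀ J ⊆ W, G.IsIndepSet J → #J ≤ #I

theorem exists_isMaximumIndepSetIn (G : SimpleGraph α) (W : Finset α) :
    ∃ I, IsMaximumIndepSetIn G W I := by
  classical
  obtain ⟨I, hI, hmax⟩ := exists_max_image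
    (W.powerset.filter fun J : Finset α ↦ G.IsIndepSet J) card ⟨∅, by simp⟩
  simp only [mem_filter, mem_powerset, and_imp] at hI hmax
  exact ⟨I, hI.1, hI.2, hmax⟩

namespace IsMaximumIndepSetIn

variable [DecidableEq α] [DecidableRel G.Adj]

theorem card_le_of_neighborsIn_subset {S J : Finset α} (hI : IsMaximumIndepSetIn G W I)
    (hJW : J ⊆ W \ I) (hJ : G.IsIndepSet J) (hJS : ∀ v ∈ J, neighborsIn G I v ⊆ S) :
    #J ≤ #S := by
  have hnot : ∀ u ∈ I \ S, ∀ v ∈ J, ¬ G.Adj u v := fun u hu v hv huv ↦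
    (mem_sdiff.mp hu).2 <| hJS v hv <| mem_filter.mpr ⟨(mem_sdiff.mp hu).1, huv⟩
  have hdisj : Disjoint (I \ S) J := (disjoint_sdiff.mono_right hJW).mono_left sdiff_subset
  have hindep : G.IsIndepSet ↑((I \ S) ∪ J) := by
    rw [coe_union, SimpleGraph.IsIndepSet, Set.pairwise_union]
    refine ⟨hI.isIndepSet.mono (mod_cast sdiff_subset), hJ, fun u hu v hv _ ↦ ?_⟩
    exact ⟨hnot u hu v hv, fun hvu ↦ hnot u hu v hv hvu.symm⟩
  have hle : #((I \ S) ∪ J) ≤ #I := hI.card_le_card _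
    (union_subset (sdiff_subset.trans hI.subset) (hJW.trans sdiff_subset)) hindep
  rw [card_union_of_disjoint hdisj] at hle
  have := le_card_sdiff S I
  omega

theorem neighborsIn_nonempty {v : α} (hI : IsMaximumIndepSetIn G W I) (hv : v ∈ W \ I) :
    (neighborsIn G I v).Nonempty := by
  by_contra! hempty
  have := hI.card_le_of_neighborsIn_subset (S := ∅) (singleton_subset_iff.mpr hv)
    (by simp) (by simp [hempty])
  simp at this

theorem card_lt_choose_of_neighborsIn_subset {s : ℕ} {S T : Finset α}
    (hI : IsMaximumIndepSetIn G W I) (hG : G.CliqueFree (s + 1)) (hTW : T ⊆ W \ I)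
    (hTS : ∀ v ∈ T, neighborsIn G I v ⊆ S) : #T < (s + #S).choose s := by
  by_contra! hT
  obtain ⟨C, -, hC⟩ | ⟨J, hJT, hJ⟩ := exists_isNClique_or_isNIndepSet G s #S T hT
  · exact hG C hC
  · have := hI.card_le_of_neighborsIn_subset (hJT.trans hTW) hJ.isIndepSet
      fun v hv ↦ hTS v (hJT hv)
    have := hJ.card_eq
    omega

theorem card_filter_card_neighborsIn_eq_le {s : ℕ} (hI : IsMaximumIndepSetIn G W I)
    (hG : G.CliqueFree (s + 1)) (l : ℕ) :
    #{v ∈ W \ I | #(neighborsIn G I v) = l} ≤ (s + l).choose s * (#I).choose l := by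
  rw [← card_powersetCard l I]
  refine card_le_mul_card_image_of_maps_to (f := neighborsIn G I) (fun v hv ↦ ?_) _
    fun S hS ↦ ?_
  · exact mem_powersetCard.mpr ⟨filter_subset _ _, (mem_filter.mp hv).2⟩
  · obtain ⟨-, rfl⟩ := mem_powersetCard.mp hS
    exact (hI.card_lt_choose_of_neighborsIn_subset hG
      ((filter_subset _ _).trans (filter_subset _ _)) fun v hv ↦ (mem_filter.mp hv).2.subset).le

end IsMaximumIndepSetIn

namespace KabFree

variable {a b : ℕ}

theorem card_lt_of_forall_adj {S T : Finset α} (hG : KabFree G a b) (hS : #S = a)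
    (hST : ∀ u ∈ S, ∀ v ∈ T, G.Adj u v) : #T < b := by
  by_contra! hT
  obtain ⟨B, hBT, hB⟩ := exists_subset_card_eq hT
  refine hG ⟨S, B, ?_, hS, hB, fun u hu v hv ↦ hST u hu v (hBT hv)⟩
  exact disjoint_left.mpr fun x hxS hxB ↦ (hST x hxS x (hBT hxB)).ne rfl

theorem cliqueFree (hG : KabFree G a b) : G.CliqueFree (a + b) := by
  classical
  intro C hC
  obtain ⟨A, hAC, hA⟩ := exists_subset_card_eq (Nat.le_add_right a b |>.trans hC.card_eq.ge)
  have hlt : #(C \ A) < b := hG.card_lt_of_forall_adj hA fun u hu v hv ↦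
    have ⟨hvC, hvA⟩ := mem_sdiff.mp hv
    hC.isClique (hAC hu) hvC (ne_of_mem_of_not_mem hu hvA)
  rw [card_sdiff_of_subset hAC, hC.card_eq] at hlt
  omega

theorem card_filter_le_card_neighborsIn_le [DecidableRel G.Adj] (hG : KabFree G a b)
    (U I : Finset α) : #{v ∈ U | a ≤ #(neighborsIn G I v)} ≤ b * (#I).choose a := by
  classical
  have hsub : {v ∈ U | a ≤ #(neighborsIn G I v)} ⊆
      (I.powersetCard a).biUnion fun S ↦ {v ∈ U | ∀ u ∈ S, G.Adj u v} := by
    intro v hv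
    obtain ⟨hvU, hav⟩ := mem_filter.mp hv
    obtain ⟨S, hSv, hS⟩ := exists_subset_card_eq hav
    exact mem_biUnion.mpr ⟨S, mem_powersetCard.mpr ⟨hSv.trans (filter_subset _ _), hS⟩,
      mem_filter.mpr ⟨hvU, fun u hu ↦ (mem_filter.mp (hSv hu)).2⟩⟩
  have hcommon : ∀ S ∈ I.powersetCard a, #{v ∈ U | ∀ u ∈ S, G.Adj u v} ≤ b := by
    intro S hS
    refine (hG.card_lt_of_forall_adj (mem_powersetCard.mp hS).2 fun u hu v hv ↦ ?_).le
    exact (mem_filter.mp hv).2 u hu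
  calc #{v ∈ U | a ≤ #(neighborsIn G I v)}
    _ ≤ #(I.powersetCard a) * b :=
      (card_le_card hsub).trans (card_biUnion_le_card_mul _ _ _ hcommon)
    _ = b * (#I).choose a := by rw [card_powersetCard, mul_comm]

theorem card_filter_card_neighborsIn_lt_le [DecidableEq α] [DecidableRel G.Adj]
    (hG : KabFree G a b) (hI : IsMaximumIndepSetIn G W I) :
    #{v ∈ W \ I | #(neighborsIn G I v) < a} ≤
      ∑ l ∈ Icc 1 (a - 1), (a + b + l - 1).choose (a + b - 1) * (#I).choose l := by
  have hmaps : ∀ v ∈ ({v ∈ W \ I | #(neighborsIn G I v) < a} : Finset α),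
      #(neighborsIn G I v) ∈ Icc 1 (a - 1) := by
    intro v hv
    obtain ⟨hvWI, hva⟩ := mem_filter.mp hv
    have := (hI.neighborsIn_nonempty hvWI).card_pos
    exact mem_Icc.mpr (by omega)
  rw [card_eq_sum_card_fiberwise hmaps]
  refine sum_le_sum fun l hl ↦ ?_
  obtain ⟨hl1, hla⟩ := mem_Icc.mp hl
  have hclique : G.CliqueFree (a + b - 1 + 1) := by
    rw [Nat.sub_add_cancel (by omega)]
    exact hG.cliqueFree
  rw [show a + b + l - 1 = a + b - 1 + l by omega]
  exact (card_le_card (filter_subset_filter _ (filter_subset _ _))).trans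
    (hI.card_filter_card_neighborsIn_eq_le hclique l)

theorem card_le_of_isMaximumIndepSetIn (hG : KabFree G a b) (hI : IsMaximumIndepSetIn G W I) :
    #W ≤ #I + b * (#I).choose a +
      ∑ l ∈ Icc 1 (a - 1), (a + b + l - 1).choose (a + b - 1) * (#I).choose l := by
  classical
  have hhigh := hG.card_filter_le_card_neighborsIn_le (W \ I) I
  have hlow := hG.card_filter_card_neighborsIn_lt_le hI
  have hsplit := card_filter_add_card_filter_not (s := W \ I)
    (fun v ↦ a ≤ #(neighborsIn G I v))
  simp only [not_le] at hsplit
  have := card_sdiff_add_card_eq_card hI.subset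
  omega

end KabFree

theorem kabfree_indep_set_general (G : SimpleGraph α) (a b k : ℕ) (W : Finset α)
    (hG : KabFree G a b)
    (hcard : k + b * Nat.choose k a +
        ∑ l ∈ Icc 1 (a - 1), Nat.choose (a + b + l - 1) (a + b - 1) * Nat.choose k l ≤ #W) :
    ∃ I ⊆ W, #I = k ∧ IndepOn G I := by
  obtain ⟨I, hI⟩ := exists_isMaximumIndepSetIn G W
  have hkI : k ≤ #I := by
    by_contra! hIk
    refine (hG.card_le_of_isMaximumIndepSetIn hI).not_gt (lt_of_lt_of_le ?_ hcard)
    refine add_lt_add_of_lt_of_le (add_lt_add_of_lt_of_le hIk ?_) ?_ <;> gcongr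
  obtain ⟨J, hJI, hJ⟩ := exists_subset_card_eq hkI
  exact ⟨J, hJI.trans hI.subset, hJ, fun u hu v hv ↦ hI.isIndepSet (hJI hu) (hJI hv)⟩

end

/-- Ramsey-type bound in `K_{a,b}`-free graphs: a `K_{a,b}`-free graph on at least
`k + b·C(k,a) + Σ_{ℓ=1}^{a−1} C(a+b+ℓ−1, a+b−1)·C(k,ℓ)` vertices contains an
independent set of size `k`. -/
theorem kabfree_indep_set (G : SimpleGraph V)
    (a b k : ℕ) (ha : 1 ≤ a) (hab : a ≤ b) (hk : 1 ≤ k) (hG : KabFree G a b)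
    (hcard : k + b * Nat.choose k a +
        ∑ l ∈ Finset.Icc 1 (a - 1), Nat.choose (a + b + l - 1) (a + b - 1) * Nat.choose k l
      ≤ Fintype.card V) :
    ∃ I : Finset V, I.card = k ∧ IndepOn G I := by
  obtain ⟨I, -, hIk, hI⟩ := kabfree_indep_set_general G a b k univ hG hcard
  exact ⟨I, hIk, hI⟩
end

section
/- Let 1 ≤ a ≤ b be integers, let G be a K_{a,b}-free finite simple graph on vertex set V, and let I ⊆ V be any set of vertices. Then the number of vertices v ∈ V with |N(v) ∩ I| ≥ a is at most b·binom(|I|, a). -/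
/-!
A vertex has at least `a` neighbors in `I` exactly when it is adjacent to all of some `a`-subset
of `I`, and in a `K_{a,b}`-free graph each `a`-subset has fewer than `b` common neighbors. A union
bound over the `a`-subsets of `I` gives the claim.
-/

open Finset

variable {V : Type*} [Fintype V] [DecidableEq V]

section SetFamily

variable {α β : Type*}

theorem le_encard_iff_exists_finset_subset {s : Set α} {n : ℕ} :
    n ≤ s.encard ↔ ∃ t : Finset α, ↑t ⊆ s ∧ #t = n := by
  constructor
  · intro hn
    obtain ⟨t, hts, htn⟩ := Set.exists_subset_encard_eq hn
    lift t to Finset α using Set.finite_of_encard_eq_coe htn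
    exact ⟨t, hts, by simpa using htn⟩
  · rintro ⟨t, hts, rfl⟩
    simpa using Set.encard_le_encard hts

theorem setOf_le_encard_inter_eq_biUnion_powersetCard (N : β → Set α) (s : Finset α) (n : ℕ) :
    {y | n ≤ (N y ∩ s).encard} = ⋃ t ∈ s.powersetCard n, {y | ↑t ⊆ N y} := by
  ext y
  simp only [Set.mem_ofPred_eq, Set.mem_iUnion₂, le_encard_iff_exists_finset_subset,
    Set.subset_inter_iff, coe_subset, mem_powersetCard, exists_prop]
  tauto

theorem encard_setOf_le_encard_inter_le {N : β → Set α} {s : Finset α} {n : ℕ} {k : ℕ∞}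
    (hk : ∀ t ∈ s.powersetCard n, {y | ↑t ⊆ N y}.encard ≤ k) :
    {y | n ≤ (N y ∩ s).encard}.encard ≤ k * (#s).choose n :=
  calc {y | n ≤ (N y ∩ s).encard}.encard
    _ = (⋃ t ∈ s.powersetCard n, {y | ↑t ⊆ N y}).encard := by
        rw [setOf_le_encard_inter_eq_biUnion_powersetCard]
    _ ≤ ∑ t ∈ s.powersetCard n, {y | ↑t ⊆ N y}.encard := set_encard_biUnion_le _ _
    _ ≤ #(s.powersetCard n) • k := sum_le_card_nsmul _ _ _ hk
    _ = k * (#s).choose n := by rw [card_powersetCard, nsmul_eq_mul, mul_comm]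

end SetFamily

section KabFree

variable {W : Type*} {G : SimpleGraph W} {a b : ℕ}

theorem KabFree.encard_setOf_subset_neighborSet_lt (hG : KabFree G a b) {A : Finset W}
    (hA : #A = a) : {v | ↑A ⊆ G.neighborSet v}.encard < b := by
  by_contra! hb
  obtain ⟨B, hBA, hB⟩ := le_encard_iff_exists_finset_subset.mp hb
  have hAB : G.IsCompleteBetween A B := fun u hu v hv ↦ (hBA hv hu).symm
  exact hG ⟨A, B, disjoint_coe.mp hAB.disjoint, hA, hB, hAB⟩

/-- The truncation of `b - 1` at `b = 0` is harmless: a `K_{a,0}`-free graph has fewer than `a`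
vertices, so both sides vanish. -/
theorem kabfree_few_high_degree_general (hG : KabFree G a b) (I : Finset W) :
    {v | a ≤ (G.neighborSet v ∩ I).encard}.encard ≤ ((b - 1) * (#I).choose a : ℕ) := by
  push_cast
  refine encard_setOf_le_encard_inter_le fun A hA ↦ ?_
  have h := hG.encard_setOf_subset_neighborSet_lt (mem_powersetCard.mp hA).2
  exact_mod_cast ENat.le_sub_one_of_lt h

end KabFree

/-- In a `K_{a,b}`-free graph, at most `b·C(|I|,a)` vertices have at least `a`
neighbors in a given set `I`. -/
theorem kabfree_few_high_degree (G : SimpleGraph V) [DecidableRel G.Adj]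
    (a b : ℕ) (ha : 1 ≤ a) (hab : a ≤ b) (hG : KabFree G a b) (I : Finset V) :
    (Finset.univ.filter (fun v => a ≤ (G.neighborFinset v ∩ I).card)).card ≤
      b * Nat.choose I.card a := by
  have h := kabfree_few_high_degree_general hG I
  simp only [← G.coe_neighborFinset, ← coe_inter, Set.encard_coe_eq_coe_finsetCard, Nat.cast_le,
    ← coe_filter_univ] at h
  exact h.trans (Nat.mul_le_mul_right _ (Nat.sub_le b 1))
end

section
/- Let 2 ≤ a ≤ b and k ≥ 1 be integers and let G be a K_{a,b}-free finite simple graph on vertex set V. Suppose some vertex v₀ has an independent set I₀ ⊆ N(v₀) with |I₀| > b·k^{a−1}. Then there exist an integer i with 1 ≤ i ≤ a−1, a set X of exactly i vertices with v₀ ∈ X, and an independent set I contained in the common neighborhood ∩_{x∈X} N(x), such that |I| > b·k^{a−i} and every vertex u ∈ V∖X satisfies |N(u) ∩ I| ≤ b·k^{a−i−1}. -/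
open Finset

variable {V : Type*} [Fintype V] [DecidableEq V]

/-! Among all sets `X ∋ v₀` with `#X ≤ a` whose common neighborhood `I` in `I₀` satisfies
`#I > b * k ^ (a - #X)`, take one to which no vertex can be added; `{v₀}` shows that there are
such sets. If `#X` were `a`, then `X` and `b` vertices of `I` would span a `K_{a,b}`. So `#X < a`,
and a vertex `u ∉ X` with more than `b * k ^ (a - #X - 1)` neighbors in `I` could be added to `X`.
The argument works for every threshold `t #X` in place of `b * k ^ (a - #X)` with `b ≤ t a`. -/

section

variable {α : Type*} {G : SimpleGraph α}

theorem IndepOn.mono {I J : Finset α} (hJ : IndepOn G J) (hIJ : I ⊆ J) : IndepOn G I :=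
  fun u hu w hw ↦ hJ u (hIJ hu) w (hIJ hw)

theorem exists_superset_forall_not_insert [DecidableEq α] {P : Finset α → Prop} {n : ℕ}
    (hcard : ∀ X, P X → #X ≤ n) {X₀ : Finset α} (hX₀ : P X₀) :
    ∃ X, X₀ ⊆ X ∧ P X ∧ ∀ u ∉ X, ¬ P (insert u X) := by
  obtain ⟨X, ⟨hsub, hX⟩, hmin⟩ :=
    exists_minimalFor_of_wellFoundedLT (fun X ↦ X₀ ⊆ X ∧ P X) (n - #·) ⟨X₀, Subset.rfl, hX₀⟩
  refine ⟨X, hsub, hX, fun u hu hP ↦ ?_⟩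
  have hXu : #X < #(insert u X) := card_lt_card (ssubset_insert hu)
  have hlt : n - #(insert u X) < n - #X :=
    Nat.sub_lt_sub_left (hXu.trans_le (hcard _ hP)) hXu
  exact hlt.not_ge (hmin ⟨hsub.trans (subset_insert u X), hP⟩ hlt.le)

variable [DecidableRel G.Adj]

variable (G) in
/-- The vertices of `I` adjacent to every vertex of `X`, that is, `I ∩ ⋂_{x ∈ X} N(x)`. -/
def commonNeighborsIn (I X : Finset α) : Finset α :=
  {w ∈ I | ∀ x ∈ X, G.Adj x w}

theorem mem_commonNeighborsIn {I X : Finset α} {w : α} :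
    w ∈ commonNeighborsIn G I X ↔ w ∈ I ∧ ∀ x ∈ X, G.Adj x w :=
  mem_filter

theorem commonNeighborsIn_insert [DecidableEq α] (I X : Finset α) (u : α) :
    commonNeighborsIn G I (insert u X) = {w ∈ commonNeighborsIn G I X | G.Adj u w} := by
  ext w
  simp only [mem_commonNeighborsIn, mem_filter, forall_mem_insert]
  tauto

theorem KabFree.card_commonNeighborsIn_lt {a b : ℕ} (hG : KabFree G a b) (I : Finset α)
    {X : Finset α} (hX : #X = a) : #(commonNeighborsIn G I X) < b := by
  by_contra! hb
  obtain ⟨B, hB, hBcard⟩ := exists_subset_card_eq hb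
  have hadj : ∀ x ∈ X, ∀ w ∈ B, G.Adj x w := fun x hx w hw ↦
    (mem_commonNeighborsIn.1 (hB hw)).2 x hx
  have hdisj : Disjoint X B := disjoint_left.2 fun x hx hxB ↦ G.irrefl (hadj x hx x hxB)
  exact hG ⟨X, B, hdisj, hX, hBcard, hadj⟩

theorem kabfree_find_X_I_general {a b : ℕ} (ha : 1 ≤ a) (hG : KabFree G a b)
    {t : ℕ → ℕ} (ht : b ≤ t a) {v₀ : α} {I₀ : Finset α} (hadj : ∀ w ∈ I₀, G.Adj v₀ w)
    (hcard : t 1 < #I₀) :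
    ∃ X I : Finset α, #X < a ∧ v₀ ∈ X ∧ I ⊆ I₀ ∧ (∀ x ∈ X, ∀ w ∈ I, G.Adj x w) ∧
      t #X < #I ∧ ∀ u ∉ X, #{w ∈ I | G.Adj u w} ≤ t (#X + 1) := by
  classical
  have hstart : commonNeighborsIn G I₀ {v₀} = I₀ :=
    filter_true_of_mem <| by simpa using hadj
  obtain ⟨X, hv₀, ⟨hXa, hlarge⟩, hmax⟩ := exists_superset_forall_not_insert
    (P := fun X ↦ #X ≤ a ∧ t #X < #(commonNeighborsIn G I₀ X)) (fun _ h ↦ h.1)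
    (X₀ := {v₀}) ⟨by simpa using ha, by simpa [hstart] using hcard⟩
  have hXlt : #X < a := hXa.lt_of_ne fun hX ↦
    (hG.card_commonNeighborsIn_lt I₀ hX).not_ge (ht.trans (hX ▸ hlarge.le))
  refine ⟨X, commonNeighborsIn G I₀ X, hXlt, singleton_subset_iff.1 hv₀, filter_subset _ _,
    fun x hx w hw ↦ (mem_commonNeighborsIn.1 hw).2 x hx, hlarge, fun u hu ↦ ?_⟩
  by_contra! hlt
  rw [← commonNeighborsIn_insert, ← card_insert_of_notMem hu] at hlt
  exact hmax u hu ⟨(card_insert_le u X).trans hXlt, hlt⟩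

end

/-- In a `K_{a,b}`-free graph, a vertex with a huge independent set in its
neighborhood yields a set `X` of `i ≤ a−1` vertices and a large independent set `I`
in the common neighborhood of `X` such that every vertex outside `X` has few
neighbors in `I`. -/
theorem kabfree_find_X_I (G : SimpleGraph V) [DecidableRel G.Adj]
    (a b k : ℕ) (ha : 2 ≤ a) (hab : a ≤ b) (hk : 1 ≤ k) (hG : KabFree G a b)
    (v₀ : V) (I₀ : Finset V) (hI₀sub : I₀ ⊆ G.neighborFinset v₀)
    (hI₀ind : IndepOn G I₀) (hI₀card : b * k ^ (a - 1) < I₀.card) :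
    ∃ (i : ℕ) (X I : Finset V), 1 ≤ i ∧ i ≤ a - 1 ∧ X.card = i ∧ v₀ ∈ X ∧
      IndepOn G I ∧ (∀ x ∈ X, I ⊆ G.neighborFinset x) ∧
      b * k ^ (a - i) < I.card ∧
      ∀ u : V, u ∉ X → (G.neighborFinset u ∩ I).card ≤ b * k ^ (a - i - 1) := by
  obtain ⟨X, I, hXa, hv₀, hsub, hadj, hlarge, hfew⟩ :=
    kabfree_find_X_I_general (by omega) hG (t := fun i ↦ b * k ^ (a - i)) (by simp)
      (fun w hw ↦ (G.mem_neighborFinset v₀ w).1 (hI₀sub hw)) hI₀card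
  exact ⟨#X, X, I, card_pos.2 ⟨v₀, hv₀⟩, Nat.le_sub_one_of_lt hXa, rfl, hv₀, hI₀ind.mono hsub,
    fun x hx w hw ↦ (G.mem_neighborFinset x w).2 (hadj x hx w hw), hlarge, fun u hu ↦ by
      simpa only [inter_comm, ← filter_mem_eq_inter, SimpleGraph.mem_neighborFinset,
        Nat.sub_sub] using hfew u hu⟩
end
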